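/- For every integer n ≥ 0, ∑_{i=0}^{n} binom(2n, 2i) · 𝔠_{2i+2} · 𝔠_{2(n-i)+2} = (2n)!/30 · ∑_{l=0}^{n} (-1)^{n-l}(10n-8l+5)(2n-2l-3)!!/(2^{n-l}(n-l)!(2l)!) · 𝔠_{2l+4} − (2n)!/3 · ∑_{l=0}^{n} (-1)^{n-l}(6l+1)(2n-2l+1)!!/(2^{n-l}(n-l)!(2l)!) · 𝔠_{2l+2} − (2n)!/30 · ∑_{l=0}^{n} (-1)^{n-l}(160l³-220l²+72l-1)(2n-2l+1)!!/(2^{n-l}(n-l)!(2l)!) · 𝔠_{2l}. -/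

import Mathlib

/-- Stirling numbers of the first kind with level 2. -/
def T2 : ℕ → ℕ → ℕ
  | 0, 0 => 1
  | 0, _ + 1 => 0
  | _ + 1, 0 => 0
  | n + 1, m + 1 => T2 n m + n ^ 2 * T2 n (m + 1)

/-- Cauchy numbers with level 2: `cauchy2 n = 𝔠_{2n}`. -/
def cauchy2 (n : ℕ) : ℚ :=
  ∑ m ∈ Finset.range (n + 1), (-4 : ℚ) ^ (n - m) * (T2 n m : ℚ) / (2 * (m : ℚ) + 1)

/-- `odFact i = (2i-1)!!`, with `odFact 0 = (-1)!! = 1`. -/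
def odFact : ℕ → ℚ
  | 0 => 1
  | i + 1 => (2 * (i : ℚ) + 1) * odFact i

/-- `ddf j = (2j-1)!!`, the odd double factorial extended to all integers:
for `j ≥ 0` it is `(2j-1)(2j-3)⋯1` (with `(-1)!! = 1`), and for `j = -i < 0`
it is `(-(2i+1))!! = (-1)^i/(2i-1)!!`. -/
def ddf (j : ℤ) : ℚ :=
  if 0 ≤ j then odFact j.toNat else (-1 : ℚ) ^ (-j).toNat / odFact (-j).toNat

/-!
The series `g = ∑ 𝔠_{2n} X ^ (2n) / (2n)!` is `X / arcsinh X`: weighting a sequence by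
`(-4) ^ (n - m) T(n, m)` substitutes `arcsinh X` into its even exponential generating function,
since both operations satisfy the same second order recurrence, and for `1 / (2m + 1)` that
generating function is `sinh X / X`.

With `θ = X d/dX` and `r = (1 + X ^ 2) ^ (-1/2)` this gives `θ g = g - g ^ 2 r`, and
`θ r = r ^ 3 - r`, so every `X ^ k (d/dX) ^ k g` is a polynomial in `g` and `r`. Eliminating the
higher powers of `g` expresses the square of the second derivative linearly through derivatives
of `g`, with coefficients `(1 + X ^ 2) ^ (1/2)` and `(1 + X ^ 2) ^ (-3/2)`. The double
factorials in the theorem are the binomial coefficients of these two powers.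
-/

open PowerSeries

section DifferentialAlgebra

variable {R A : Type*} [CommRing R] [CommRing A] [Algebra R A]

/-- The operator `δ (δ - 1) ⋯ (δ - k + 1)` attached to a derivation `δ`. For `δ = X * d/dX` it is
`X ^ k * (d/dX) ^ k`. -/
def fallingDerivation (δ : Derivation R A A) : ℕ → A → A
  | 0, f => f
  | k + 1, f => δ (fallingDerivation δ k f) - k * fallingDerivation δ k f

lemma derivation_ofNat (δ : Derivation R A A) (n : ℕ) [n.AtLeastTwo] : δ (ofNat(n) : A) = 0 :=
  δ.map_natCast n

variable (δ : Derivation R A A) {g r : A} (hg : δ g = g - g ^ 2 * r) (hr : δ r = r ^ 3 - r)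

include hg hr

lemma derivation_derivation_eq :
    δ (δ g) = g - 2 * g ^ 2 * r - g ^ 2 * r ^ 3 + 2 * g ^ 3 * r ^ 2 := by
  simp only [hg, hr, map_sub, Derivation.leibniz, Derivation.leibniz_pow, smul_eq_mul,
    nsmul_eq_mul]
  ring

lemma derivation_derivation_derivation_eq :
    δ (δ (δ g)) = g - 3 * g ^ 2 * r - g ^ 2 * r ^ 3 - 3 * g ^ 2 * r ^ 5
      + 6 * g ^ 3 * r ^ 2 + 6 * g ^ 3 * r ^ 4 - 6 * g ^ 4 * r ^ 3 := by
  rw [derivation_derivation_eq δ hg hr]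
  simp only [hg, hr, map_sub, map_add, Derivation.leibniz, Derivation.leibniz_pow,
    smul_eq_mul, nsmul_eq_mul, derivation_ofNat]
  ring

lemma fallingDerivation_two_eq :
    fallingDerivation δ 2 g = -(g ^ 2 * r) - g ^ 2 * r ^ 3 + 2 * g ^ 3 * r ^ 2 := by
  simp only [fallingDerivation, Nat.cast_zero, Nat.cast_one, zero_mul, one_mul, sub_zero]
  rw [derivation_derivation_eq δ hg hr, hg]
  ring

lemma fallingDerivation_three_eq :
    fallingDerivation δ 3 g = g ^ 2 * r + 2 * g ^ 2 * r ^ 3 - 3 * g ^ 2 * r ^ 5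
      + 6 * g ^ 3 * r ^ 4 - 6 * g ^ 4 * r ^ 3 := by
  rw [fallingDerivation, fallingDerivation_two_eq δ hg hr]
  simp only [hg, hr, map_sub, map_add, map_neg, Derivation.leibniz, Derivation.leibniz_pow,
    smul_eq_mul, nsmul_eq_mul, derivation_ofNat]
  ring

lemma fallingDerivation_four_eq :
    fallingDerivation δ 4 g = -(2 * g ^ 2 * r) - 7 * g ^ 2 * r ^ 3 + 24 * g ^ 2 * r ^ 5
      - 15 * g ^ 2 * r ^ 7 - 2 * g ^ 3 * r ^ 2 - 28 * g ^ 3 * r ^ 4 + 30 * g ^ 3 * r ^ 6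
      + 12 * g ^ 4 * r ^ 3 - 36 * g ^ 4 * r ^ 5 + 24 * g ^ 5 * r ^ 4 := by
  rw [fallingDerivation, fallingDerivation_three_eq δ hg hr]
  simp only [hg, hr, map_sub, map_add, Derivation.leibniz, Derivation.leibniz_pow, smul_eq_mul,
    nsmul_eq_mul, derivation_ofNat]
  ring

lemma fallingDerivation_five_eq :
    fallingDerivation δ 5 g = 6 * g ^ 2 * r + 33 * g ^ 2 * r ^ 3 - 189 * g ^ 2 * r ^ 5
      + 255 * g ^ 2 * r ^ 7 - 105 * g ^ 2 * r ^ 9 + 10 * g ^ 3 * r ^ 2 + 150 * g ^ 3 * r ^ 4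
      - 370 * g ^ 3 * r ^ 6 + 210 * g ^ 3 * r ^ 8 - 30 * g ^ 4 * r ^ 3 + 300 * g ^ 4 * r ^ 5
      - 270 * g ^ 4 * r ^ 7 - 120 * g ^ 5 * r ^ 4 + 240 * g ^ 5 * r ^ 6 - 120 * g ^ 6 * r ^ 5 := by
  rw [fallingDerivation, fallingDerivation_four_eq δ hg hr]
  simp only [hg, hr, map_sub, map_add, map_neg, Derivation.leibniz, Derivation.leibniz_pow,
    smul_eq_mul, nsmul_eq_mul, derivation_ofNat]
  ring

theorem fallingDerivation_quadratic_relation {s : A} (hsr : s * r = 1) :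
    30 * fallingDerivation δ 2 g ^ 2 =
      5 * fallingDerivation δ 4 g * r
        - (10 * fallingDerivation δ 4 g + fallingDerivation δ 5 g) * s
        - 10 * (s ^ 2 - 1) * (3 * fallingDerivation δ 3 g + fallingDerivation δ 2 g) * r ^ 3
        - (s ^ 2 - 1) ^ 2 * (20 * δ (δ (δ g)) - 55 * δ (δ g) + 36 * δ g - g) * r ^ 3 := by
  have h₁ : (s ^ 2 - 1) * r ^ 3 = r - r ^ 3 := by
    linear_combination (s * r ^ 2 + r) * hsr
  have h₂ : (s ^ 2 - 1) ^ 2 * r ^ 3 = s - 2 * r + r ^ 3 := by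
    linear_combination (s ^ 3 * r ^ 2 + s ^ 2 * r + s - 2 * s * r ^ 2 - 2 * r) * hsr
  rw [mul_right_comm _ _ (r ^ 3), mul_assoc 10, h₁, mul_right_comm _ _ (r ^ 3), h₂,
    fallingDerivation_five_eq δ hg hr, fallingDerivation_four_eq δ hg hr,
    fallingDerivation_three_eq δ hg hr, fallingDerivation_two_eq δ hg hr,
    derivation_derivation_derivation_eq δ hg hr, derivation_derivation_eq δ hg hr, hg]
  -- `s` now only enters through a multiple of `s * r`, whose cofactor is written out here
  linear_combination (-(2 * g ^ 2 * r ^ 2) - 9 * g ^ 2 * r ^ 4 + 105 * g ^ 2 * r ^ 6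
    - 105 * g ^ 2 * r ^ 8 - 10 * g ^ 3 * r ^ 3 - 70 * g ^ 3 * r ^ 5 + 210 * g ^ 3 * r ^ 7
    - 30 * g ^ 4 * r ^ 2 - 60 * g ^ 4 * r ^ 4 - 270 * g ^ 4 * r ^ 6 + 120 * g ^ 5 * r ^ 3
    + 240 * g ^ 5 * r ^ 5 - 120 * g ^ 6 * r ^ 4) * hsr

end DifferentialAlgebra

section EulerOperator

variable {R : Type*} [CommRing R]

/-- The Euler operator `X * d/dX` on power series, which multiplies the coefficient of `X ^ n`
by `n`. -/
noncomputable def eulerOp : Derivation R R⟦X⟧ R⟦X⟧ :=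
  (X : R⟦X⟧) • d⁄dX R

lemma eulerOp_apply (f : R⟦X⟧) : eulerOp f = X * d⁄dX R f := rfl

lemma coeff_eulerOp (f : R⟦X⟧) (n : ℕ) : coeff n (eulerOp f) = n * coeff n f := by
  cases n with
  | zero => simp [eulerOp_apply]
  | succ n => rw [eulerOp_apply, coeff_succ_X_mul, coeff_derivative, Nat.cast_succ, mul_comm]

lemma eulerOp_X_pow (k : ℕ) : eulerOp (X ^ k : R⟦X⟧) = (k : R⟦X⟧) * X ^ k := by
  ext n
  rw [coeff_eulerOp, ← nsmul_eq_mul k, map_nsmul, coeff_X_pow, nsmul_eq_mul]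
  split_ifs with h
  · rw [h]
  · rw [mul_zero, mul_zero]

theorem fallingDerivation_eulerOp (k : ℕ) (f : R⟦X⟧) :
    fallingDerivation (eulerOp (R := R)) k f = X ^ k * (d⁄dX R)^[k] f := by
  induction k with
  | zero => simp only [fallingDerivation, pow_zero, one_mul, Function.iterate_zero, id_eq]
  | succ k ih =>
    rw [fallingDerivation, ih, Derivation.leibniz, eulerOp_X_pow, eulerOp_apply,
      Function.iterate_succ_apply', smul_eq_mul, smul_eq_mul]
    ring

end EulerOperator

section EvenSeries

lemma coeff_ofNat_mul {R : Type*} [Semiring R] (k : ℕ) [k.AtLeastTwo] (f : R⟦X⟧) (n : ℕ) :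
    coeff n (ofNat(k) * f) = ofNat(k) * coeff n f := by
  rw [← Nat.ofNat_nsmul_eq_mul, map_nsmul, Nat.ofNat_nsmul_eq_mul]

lemma powerSeries_ext_of_even_of_odd {R : Type*} [Semiring R] {f g : R⟦X⟧}
    (heven : ∀ n, coeff (2 * n) f = coeff (2 * n) g)
    (hodd : ∀ n, coeff (2 * n + 1) f = coeff (2 * n + 1) g) : f = g := by
  ext n
  obtain ⟨k, rfl | rfl⟩ := n.even_or_odd'
  exacts [heven k, hodd k]

lemma coeff_expand_two_odd {R : Type*} [CommRing R] (f : R⟦X⟧) (n : ℕ) :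
    coeff (2 * n + 1) (expand 2 two_ne_zero f) = 0 :=
  coeff_expand_of_not_dvd 2 two_ne_zero f (by lia)

variable {K : Type*} [Field K]

/-- The exponential generating function `∑ u n * X ^ (2 * n) / (2 * n)!` of a sequence indexed by
half the exponent, like `cauchy2`. -/
noncomputable def evenEGF : (ℕ → K) →ₗ[K] K⟦X⟧ where
  toFun u := expand 2 two_ne_zero (mk fun n ↦ u n / (2 * n).factorial)
  map_add' u v := by
    rw [← map_add]
    congr 1
    ext n
    simp only [coeff_mk, map_add, Pi.add_apply, add_div]
  map_smul' c u := by
    rw [RingHom.id_apply, ← map_smul]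
    congr 1
    ext n
    simp only [coeff_mk, map_smul, Pi.smul_apply, smul_eq_mul, mul_div_assoc]

lemma evenEGF_apply (u : ℕ → K) :
    evenEGF u = expand 2 two_ne_zero (mk fun n ↦ u n / (2 * n).factorial) := rfl

lemma coeff_evenEGF (u : ℕ → K) (n : ℕ) :
    coeff (2 * n) (evenEGF u) = u n / (2 * n).factorial := by
  rw [evenEGF_apply, coeff_expand_mul, coeff_mk]

lemma coeff_evenEGF_odd (u : ℕ → K) (n : ℕ) : coeff (2 * n + 1) (evenEGF u) = 0 :=
  coeff_expand_two_odd _ n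

lemma constantCoeff_evenEGF (u : ℕ → K) : constantCoeff (evenEGF u) = u 0 := by
  rw [evenEGF_apply, constantCoeff_expand, ← coeff_zero_eq_constantCoeff_apply, coeff_mk,
    mul_zero, Nat.factorial_zero, Nat.cast_one, div_one]

lemma eulerOp_evenEGF (u : ℕ → K) : eulerOp (evenEGF u) = evenEGF fun n ↦ 2 * n * u n := by
  refine powerSeries_ext_of_even_of_odd (fun n ↦ ?_) fun n ↦ ?_
  · rw [coeff_eulerOp, coeff_evenEGF, coeff_evenEGF]
    push_cast
    ring
  · rw [coeff_eulerOp, coeff_evenEGF_odd, coeff_evenEGF_odd, mul_zero]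

variable [CharZero K]

lemma derivative_evenEGF (u : ℕ → K) :
    d⁄dX K (evenEGF u) = X * evenEGF fun n ↦ u (n + 1) / (2 * n + 1) := by
  refine powerSeries_ext_of_even_of_odd (fun n ↦ ?_) fun n ↦ ?_
  · rw [coeff_derivative, coeff_evenEGF_odd, zero_mul]
    cases n with
    | zero => rw [mul_zero, coeff_zero_X_mul]
    | succ n => rw [mul_add_one, coeff_succ_X_mul, coeff_evenEGF_odd]
  · have h₁ : (2 * n + 1 : K) ≠ 0 := by exact_mod_cast (2 * n).succ_ne_zero
    have h₂ : (2 * n + 1 + 1 : K) ≠ 0 := by exact_mod_cast (2 * n + 1).succ_ne_zero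
    rw [coeff_derivative, coeff_succ_X_mul, show 2 * n + 1 + 1 = 2 * (n + 1) by ring,
      coeff_evenEGF, coeff_evenEGF, Nat.mul_succ, Nat.factorial_succ, Nat.factorial_succ]
    push_cast
    field_simp

lemma derivative_derivative_evenEGF (u : ℕ → K) :
    d⁄dX K (d⁄dX K (evenEGF u)) = evenEGF fun n ↦ u (n + 1) := by
  rw [derivative_evenEGF, Derivation.leibniz, derivative_X, smul_eq_mul, smul_eq_mul, mul_one,
    ← eulerOp_apply, eulerOp_evenEGF, ← map_add]
  congr 1
  ext n
  have h : (2 * n + 1 : K) ≠ 0 := by exact_mod_cast (2 * n).succ_ne_zero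
  rw [Pi.add_apply]
  field_simp

lemma coeff_evenEGF_mul_evenEGF (u v : ℕ → K) (n : ℕ) :
    coeff (2 * n) (evenEGF u * evenEGF v) =
      (∑ i ∈ Finset.range (n + 1), ((2 * n).choose (2 * i) : K) * u i * v (n - i)) /
        (2 * n).factorial := by
  rw [evenEGF_apply, evenEGF_apply, ← map_mul, coeff_expand_mul, coeff_mul,
    Finset.Nat.sum_antidiagonal_eq_sum_range_succ_mk, Finset.sum_div]
  refine Finset.sum_congr rfl fun i hi ↦ ?_
  have hi : i ≤ n := Finset.mem_range_succ_iff.mp hi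
  rw [coeff_mk, coeff_mk, Nat.cast_choose K (Nat.mul_le_mul_left 2 hi), ← Nat.mul_sub]
  have := Nat.cast_ne_zero (R := K).mpr (2 * n).factorial_ne_zero
  field_simp

end EvenSeries

section BinomialCoefficients

lemma ddf_natCast (n : ℕ) : ddf n = odFact n := by
  rw [ddf, if_pos (Int.natCast_nonneg n), Int.toNat_natCast]

lemma odFact_ne_zero (n : ℕ) : odFact n ≠ 0 := by
  induction n with
  | zero => exact one_ne_zero
  | succ n ih => exact mul_ne_zero (by positivity) ih

lemma ddf_ne_zero (j : ℤ) : ddf j ≠ 0 := by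
  rw [ddf]
  split_ifs
  · exact odFact_ne_zero _
  · exact div_ne_zero (pow_ne_zero _ (neg_ne_zero.mpr one_ne_zero)) (odFact_ne_zero _)

lemma ddf_neg_natCast (n : ℕ) : ddf (-n) = (-1) ^ n / odFact n := by
  cases n with
  | zero => simp [ddf, odFact]
  | succ n => rw [ddf, if_neg (by omega), neg_neg, Int.toNat_natCast]

lemma ddf_add_one (j : ℤ) : ddf (j + 1) = (2 * j + 1) * ddf j := by
  obtain ⟨n, rfl | rfl⟩ := j.eq_nat_or_neg
  · rw [← Nat.cast_succ, ddf_natCast, ddf_natCast, odFact, Int.cast_natCast]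
  · cases n with
    | zero => simp [ddf, odFact]
    | succ n =>
      rw [show (-((n + 1 : ℕ) : ℤ) + 1) = -n by push_cast; ring, ddf_neg_natCast, ddf_neg_natCast,
        odFact]
      have := odFact_ne_zero n
      have : (2 * n + 1 : ℚ) ≠ 0 := by positivity
      push_cast
      field_simp
      ring

lemma succ_mul_ringChoose_succ {R : Type*} [CommRing R] [BinomialRing R] (r : R) (k : ℕ) :
    (k + 1) * Ring.choose r (k + 1) = (r - k) * Ring.choose r k := by
  simpa [mul_comm] using Ring.choose_smul_choose r k.le_succ

theorem ringChoose_neg_odd_half (j : ℤ) (k : ℕ) :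
    Ring.choose (-(2 * j + 1) / 2 : ℚ) k =
      (-1) ^ k * ddf (j + k) / (2 ^ k * k.factorial * ddf j) := by
  induction k with
  | zero => simp [div_self (ddf_ne_zero j)]
  | succ k ih =>
    have hk : (k + 1 : ℚ) ≠ 0 := by positivity
    have := ddf_ne_zero j
    rw [← mul_right_inj' hk, succ_mul_ringChoose_succ, ih, Nat.cast_succ, ← add_assoc, ddf_add_one,
      Nat.factorial_succ]
    push_cast
    field_simp
    ring

end BinomialCoefficients

section OneAddSqPow

/-- The binomial series `(1 + X ^ 2) ^ r`. -/
noncomputable def oneAddSqPow (r : ℚ) : ℚ⟦X⟧ :=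
  expand 2 two_ne_zero (binomialSeries ℚ r)

lemma oneAddSqPow_add (r s : ℚ) : oneAddSqPow (r + s) = oneAddSqPow r * oneAddSqPow s := by
  rw [oneAddSqPow, binomialSeries_add, map_mul, oneAddSqPow, oneAddSqPow]

lemma oneAddSqPow_zero : oneAddSqPow 0 = 1 := by
  rw [oneAddSqPow, binomialSeries_zero, map_one]

lemma oneAddSqPow_one : oneAddSqPow 1 = 1 + X ^ 2 := by
  have := binomialSeries_nat (R := ℚ) (A := ℚ) 1
  rw [oneAddSqPow, ← Nat.cast_one, this, pow_one, map_add, map_one, expand_X]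

lemma constantCoeff_oneAddSqPow (r : ℚ) : constantCoeff (oneAddSqPow r) = 1 := by
  rw [oneAddSqPow, constantCoeff_expand, binomialSeries_constantCoeff]

lemma oneAddSqPow_half_sq : oneAddSqPow (1 / 2) ^ 2 = 1 + X ^ 2 := by
  rw [sq, ← oneAddSqPow_add, add_halves, oneAddSqPow_one]

lemma oneAddSqPow_half_mul_neg_half : oneAddSqPow (1 / 2) * oneAddSqPow (-1 / 2) = 1 := by
  rw [← oneAddSqPow_add, neg_div, add_neg_cancel, oneAddSqPow_zero]

lemma oneAddSqPow_neg_half_cube : oneAddSqPow (-1 / 2) ^ 3 = oneAddSqPow (-3 / 2) := by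
  rw [pow_succ, sq, ← oneAddSqPow_add, ← oneAddSqPow_add]
  norm_num

lemma derivative_oneAddSqPow (r : ℚ) :
    d⁄dX ℚ (oneAddSqPow r) = (2 * r) • (X * oneAddSqPow (r - 1)) := by
  refine powerSeries_ext_of_even_of_odd (fun n ↦ ?_) fun n ↦ ?_
  · rw [coeff_derivative, oneAddSqPow, coeff_expand_two_odd, zero_mul, coeff_smul]
    cases n with
    | zero => rw [mul_zero, coeff_zero_X_mul, smul_zero]
    | succ n =>
      rw [mul_add_one, coeff_succ_X_mul, oneAddSqPow, coeff_expand_two_odd, smul_zero]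
  · have h := Ring.choose_smul_choose r n.succ_pos
    rw [coeff_derivative, coeff_smul, coeff_succ_X_mul, add_assoc, one_add_one_eq_two,
      ← mul_add_one, oneAddSqPow, oneAddSqPow, coeff_expand_mul, coeff_expand_mul,
      binomialSeries_coeff, binomialSeries_coeff]
    simp only [Nat.succ_eq_add_one, zero_add, Nat.choose_one_right, nsmul_eq_mul, Nat.cast_add,
      Nat.cast_one, Ring.choose_one_right', pow_one, add_tsub_cancel_right, smul_eq_mul, mul_one,
      Nat.cast_mul, Nat.cast_ofNat] at h ⊢
    linear_combination 2 * h

lemma derivative_oneAddSqPow_half :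
    d⁄dX ℚ (oneAddSqPow (1 / 2)) = X * oneAddSqPow (-1 / 2) := by
  rw [derivative_oneAddSqPow]
  norm_num

lemma eulerOp_oneAddSqPow_half :
    eulerOp (oneAddSqPow (1 / 2)) = oneAddSqPow (1 / 2) - oneAddSqPow (-1 / 2) := by
  rw [eulerOp_apply, derivative_oneAddSqPow_half]
  linear_combination oneAddSqPow (1 / 2) * oneAddSqPow_half_mul_neg_half
    - oneAddSqPow (-1 / 2) * oneAddSqPow_half_sq

lemma eulerOp_oneAddSqPow_neg_half :
    eulerOp (oneAddSqPow (-1 / 2)) = oneAddSqPow (-1 / 2) ^ 3 - oneAddSqPow (-1 / 2) := by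
  have h : d⁄dX ℚ (oneAddSqPow (-1 / 2)) = -(X * oneAddSqPow (-1 / 2) ^ 3) := by
    rw [derivative_oneAddSqPow, oneAddSqPow_neg_half_cube]
    norm_num
  rw [eulerOp_apply, h]
  linear_combination oneAddSqPow (-1 / 2) ^ 3 * oneAddSqPow_half_sq
    - (oneAddSqPow (1 / 2) * oneAddSqPow (-1 / 2) ^ 2 + oneAddSqPow (-1 / 2)) *
      oneAddSqPow_half_mul_neg_half

theorem coeff_evenEGF_mul_oneAddSqPow (u : ℕ → ℚ) (j : ℤ) (n : ℕ) :
    coeff (2 * n) (evenEGF u * oneAddSqPow (-(2 * j + 1) / 2)) =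
      (∑ l ∈ Finset.range (n + 1), (-1) ^ (n - l) * ddf (n - l + j) /
        (2 ^ (n - l) * (n - l).factorial * (2 * l).factorial) * u l) / ddf j := by
  rw [evenEGF_apply, oneAddSqPow, ← map_mul, coeff_expand_mul, coeff_mul,
    Finset.Nat.sum_antidiagonal_eq_sum_range_succ_mk, Finset.sum_div]
  refine Finset.sum_congr rfl fun l hl ↦ ?_
  rw [coeff_mk, binomialSeries_coeff, smul_eq_mul, mul_one, ringChoose_neg_odd_half, add_comm j,
    Nat.cast_sub (Finset.mem_range_succ_iff.mp hl)]
  field_simp [ddf_ne_zero j]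

end OneAddSqPow

section Arcsinh

lemma constantCoeff_subst_of_constantCoeff_zero {R : Type*} [CommRing R] {a : R⟦X⟧}
    (ha : constantCoeff a = 0) (f : R⟦X⟧) : constantCoeff (f.subst a) = constantCoeff f := by
  have hs : HasSubst a := HasSubst.of_constantCoeff_zero' ha
  have h : constantCoeff ((f - C (constantCoeff f)).subst a) = 0 :=
    constantCoeff_subst_eq_zero ha _ (by rw [map_sub, constantCoeff_C, sub_self])
  rwa [← coe_substAlgHom hs, map_sub, C_eq_algebraMap, AlgHom.commutes, coe_substAlgHom hs,
    ← C_eq_algebraMap, map_sub, constantCoeff_C, sub_eq_zero] at h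

/-- The hyperbolic cosine power series. -/
noncomputable def coshSeries : ℚ⟦X⟧ := evenEGF 1

/-- The hyperbolic sine power series. -/
noncomputable def sinhSeries : ℚ⟦X⟧ := d⁄dX ℚ coshSeries

lemma derivative_sinhSeries : d⁄dX ℚ sinhSeries = coshSeries :=
  derivative_derivative_evenEGF 1

lemma sinhSeries_eq : sinhSeries = X * evenEGF fun n : ℕ ↦ 1 / (2 * n + 1 : ℚ) :=
  derivative_evenEGF 1

lemma constantCoeff_sinhSeries : constantCoeff sinhSeries = 0 := by
  rw [sinhSeries_eq, map_mul, constantCoeff_X, zero_mul]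

lemma coeff_one_sinhSeries : coeff 1 sinhSeries = 1 := by
  rw [sinhSeries_eq, ← zero_add 1, coeff_succ_X_mul, coeff_zero_eq_constantCoeff_apply,
    constantCoeff_evenEGF]
  norm_num

lemma coshSeries_sq : coshSeries ^ 2 = 1 + sinhSeries ^ 2 := by
  refine derivative.ext ?_ ?_
  · simp only [map_add, Derivation.leibniz_pow, Derivation.map_one_eq_zero, derivative_sinhSeries,
      show d⁄dX ℚ coshSeries = sinhSeries from rfl, smul_eq_mul]
    ring
  · simp only [map_add, map_pow, map_one, constantCoeff_sinhSeries, coshSeries,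
      constantCoeff_evenEGF, Pi.one_apply]
    norm_num

noncomputable instance invertibleCoeffOneSinhSeries : Invertible (coeff 1 sinhSeries) :=
  invertibleOne.copy _ coeff_one_sinhSeries

/-- The power series of the inverse hyperbolic sine. -/
noncomputable def arcsinhSeries : ℚ⟦X⟧ := sinhSeries.substInv

lemma constantCoeff_arcsinhSeries : constantCoeff arcsinhSeries = 0 := constantCoeff_substInv _

lemma hasSubst_arcsinhSeries : HasSubst arcsinhSeries := HasSubst.substInv _

lemma sinhSeries_subst_arcsinhSeries : sinhSeries.subst arcsinhSeries = X :=
  subst_substInv_right _ constantCoeff_sinhSeries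

lemma coshSeries_subst_arcsinhSeries : coshSeries.subst arcsinhSeries = oneAddSqPow (1 / 2) := by
  have ha := hasSubst_arcsinhSeries
  have hsq : (coshSeries.subst arcsinhSeries) ^ 2 = oneAddSqPow (1 / 2) ^ 2 := by
    rw [← subst_pow ha, coshSeries_sq, subst_add ha, subst_pow ha, sinhSeries_subst_arcsinhSeries,
      oneAddSqPow_half_sq, ← coe_substAlgHom ha, map_one]
  have hc : constantCoeff (coshSeries.subst arcsinhSeries) = 1 := by
    rw [constantCoeff_subst_of_constantCoeff_zero constantCoeff_arcsinhSeries, coshSeries,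
      constantCoeff_evenEGF, Pi.one_apply]
  refine (sq_eq_sq_iff_eq_or_eq_neg.mp hsq).resolve_right fun h ↦ ?_
  have := congrArg constantCoeff h
  rw [hc, map_neg, constantCoeff_oneAddSqPow] at this
  norm_num at this

lemma derivative_arcsinhSeries : d⁄dX ℚ arcsinhSeries = oneAddSqPow (-1 / 2) := by
  have h : d⁄dX ℚ arcsinhSeries * oneAddSqPow (1 / 2) = 1 := by
    rw [mul_comm, ← coshSeries_subst_arcsinhSeries, ← derivative_sinhSeries,
      ← derivative_subst hasSubst_arcsinhSeries, sinhSeries_subst_arcsinhSeries, derivative_X]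
  exact left_inv_eq_right_inv h oneAddSqPow_half_mul_neg_half

end Arcsinh

section StirlingTransform

lemma T2_eq_zero_of_lt {n m : ℕ} (h : n < m) : T2 n m = 0 := by
  induction n generalizing m with
  | zero => cases m with
    | zero => exact absurd h (lt_irrefl 0)
    | succ m => rw [T2]
  | succ n ih => cases m with
    | zero => exact absurd h (Nat.not_lt_zero _)
    | succ m => rw [T2, ih (Nat.lt_of_succ_lt_succ h), ih (Nat.lt_of_succ_lt h), mul_zero, add_zero]

/-- The transform of a sequence `u` by the numbers `(-4) ^ (n - m) * T2 n m`, which substitutes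
`arcsinhSeries` into the generating function `evenEGF u`. -/
def stirlingTransform (u : ℕ → ℚ) (n : ℕ) : ℚ :=
  ∑ m ∈ Finset.range (n + 1), (-4 : ℚ) ^ (n - m) * T2 n m * u m

lemma cauchy2_eq_stirlingTransform :
    cauchy2 = stirlingTransform fun m ↦ 1 / (2 * m + 1) := by
  ext n
  simp only [cauchy2, stirlingTransform, mul_one_div]

lemma stirlingTransform_zero (u : ℕ → ℚ) : stirlingTransform u 0 = u 0 := by
  simp [stirlingTransform, T2]

lemma stirlingTransform_succ (u : ℕ → ℚ) (n : ℕ) :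
    stirlingTransform u (n + 1) =
      stirlingTransform (fun m ↦ u (m + 1)) n - 4 * n ^ 2 * stirlingTransform u n := by
  have hzero : (n : ℚ) ^ 2 * T2 n 0 = 0 := by
    cases n <;> simp [T2]
  have hstep (m : ℕ) (hm : m ∈ Finset.range n) :
      (-4 : ℚ) ^ (n - m) * T2 n (m + 1) = -4 * ((-4) ^ (n - (m + 1)) * T2 n (m + 1)) := by
    rw [← mul_assoc, ← pow_succ', Nat.sub_add_eq, Nat.sub_add_cancel (by grind)]
  have hshift : ∑ m ∈ Finset.range (n + 1), (-4 : ℚ) ^ (n - m) * T2 n (m + 1) * u (m + 1) =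
      -4 * (stirlingTransform u n - (-4) ^ n * T2 n 0 * u 0) := by
    rw [stirlingTransform, Finset.sum_range_succ, T2_eq_zero_of_lt n.lt_succ_self,
      Finset.sum_range_succ', Nat.sub_zero, add_sub_cancel_right, Finset.mul_sum, Nat.cast_zero,
      mul_zero, zero_mul, add_zero]
    exact Finset.sum_congr rfl fun m hm ↦ by rw [hstep m hm]; ring
  calc stirlingTransform u (n + 1)
      = stirlingTransform (fun m ↦ u (m + 1)) n +
          n ^ 2 * ∑ m ∈ Finset.range (n + 1), (-4 : ℚ) ^ (n - m) * T2 n (m + 1) * u (m + 1) := by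
        rw [stirlingTransform, stirlingTransform, Finset.sum_range_succ', Finset.mul_sum,
          ← Finset.sum_add_distrib]
        simp only [T2, Nat.cast_zero, mul_zero, zero_mul, add_zero, Nat.add_sub_add_right]
        refine Finset.sum_congr rfl fun m _ ↦ ?_
        push_cast
        ring
    _ = stirlingTransform (fun m ↦ u (m + 1)) n - 4 * n ^ 2 * stirlingTransform u n := by
        rw [hshift]
        linear_combination 4 * (-4) ^ n * u 0 * hzero

lemma eq_of_arcsinh_recurrence {ι : Type*} {σ : ι → ι} {F G : ι → ℚ⟦X⟧}
    (hF : ∀ i, d⁄dX ℚ (d⁄dX ℚ (F i)) + eulerOp (eulerOp (F i)) = F (σ i))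
    (hG : ∀ i, d⁄dX ℚ (d⁄dX ℚ (G i)) + eulerOp (eulerOp (G i)) = G (σ i))
    (h₀ : ∀ i, coeff 0 (F i) = coeff 0 (G i)) (h₁ : ∀ i, coeff 1 (F i) = coeff 1 (G i)) (i : ι) :
    F i = G i := by
  ext n
  induction n using Nat.twoStepInduction generalizing i with
  | zero => exact h₀ i
  | one => exact h₁ i
  | more n ih _ =>
    have hFi := congrArg (coeff n) (hF i)
    have hGi := congrArg (coeff n) (hG i)
    rw [← ih (σ i), ← hFi] at hGi
    simp only [map_add, coeff_derivative, coeff_eulerOp, ih i, add_left_inj] at hGi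
    have hsucc₂ : ((n + 1 : ℕ) + 1 : ℚ) ≠ 0 := by positivity
    have hsucc₁ : (n + 1 : ℚ) ≠ 0 := by positivity
    exact (mul_right_cancel₀ hsucc₂ (mul_right_cancel₀ hsucc₁ hGi)).symm

lemma arcsinh_recurrence_evenEGF_stirlingTransform (u : ℕ → ℚ) :
    d⁄dX ℚ (d⁄dX ℚ (evenEGF (stirlingTransform u))) +
        eulerOp (eulerOp (evenEGF (stirlingTransform u))) =
      evenEGF (stirlingTransform fun m ↦ u (m + 1)) := by
  rw [derivative_derivative_evenEGF, eulerOp_evenEGF, eulerOp_evenEGF, ← map_add]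
  congr 1
  ext n
  rw [Pi.add_apply, stirlingTransform_succ]
  ring

lemma arcsinh_recurrence_subst (f : ℚ⟦X⟧) :
    d⁄dX ℚ (d⁄dX ℚ (f.subst arcsinhSeries)) + eulerOp (eulerOp (f.subst arcsinhSeries)) =
      (d⁄dX ℚ (d⁄dX ℚ f)).subst arcsinhSeries := by
  have h (g : ℚ⟦X⟧) : oneAddSqPow (1 / 2) * d⁄dX ℚ (g.subst arcsinhSeries) =
      (d⁄dX ℚ g).subst arcsinhSeries := by
    rw [derivative_subst hasSubst_arcsinhSeries, derivative_arcsinhSeries]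
    linear_combination (d⁄dX ℚ g).subst arcsinhSeries * oneAddSqPow_half_mul_neg_half
  rw [← h (d⁄dX ℚ f), ← h f, Derivation.leibniz, derivative_oneAddSqPow_half]
  simp only [eulerOp_apply, Derivation.leibniz, derivative_X, smul_eq_mul, mul_one]
  linear_combination -d⁄dX ℚ (d⁄dX ℚ (f.subst arcsinhSeries)) * oneAddSqPow_half_sq
    - X * d⁄dX ℚ (f.subst arcsinhSeries) * oneAddSqPow_half_mul_neg_half

theorem evenEGF_subst_arcsinhSeries (u : ℕ → ℚ) :
    (evenEGF u).subst arcsinhSeries = evenEGF (stirlingTransform u) := by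
  refine eq_of_arcsinh_recurrence (σ := fun u n ↦ u (n + 1))
    (F := fun u ↦ (evenEGF u).subst arcsinhSeries) (G := fun u ↦ evenEGF (stirlingTransform u))
    (fun u ↦ ?_) arcsinh_recurrence_evenEGF_stirlingTransform (fun u ↦ ?_) (fun u ↦ ?_) u
  · rw [arcsinh_recurrence_subst, derivative_derivative_evenEGF]
  · rw [coeff_zero_eq_constantCoeff_apply, coeff_zero_eq_constantCoeff_apply,
      constantCoeff_subst_of_constantCoeff_zero constantCoeff_arcsinhSeries, constantCoeff_evenEGF,
      constantCoeff_evenEGF, stirlingTransform_zero]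
  · have h := coeff_derivative ((evenEGF u).subst arcsinhSeries) 0
    rw [derivative_subst hasSubst_arcsinhSeries, coeff_zero_eq_constantCoeff_apply, map_mul,
      constantCoeff_subst_of_constantCoeff_zero constantCoeff_arcsinhSeries, derivative_evenEGF,
      map_mul, constantCoeff_X, zero_mul, zero_mul, Nat.cast_zero, zero_add, zero_add,
      mul_one] at h
    exact h.symm.trans (coeff_evenEGF_odd _ 0).symm

theorem evenEGF_cauchy2_mul_arcsinhSeries : evenEGF cauchy2 * arcsinhSeries = X := by
  have ha := hasSubst_arcsinhSeries
  have h := sinhSeries_subst_arcsinhSeries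
  rwa [sinhSeries_eq, subst_mul ha, subst_X ha, evenEGF_subst_arcsinhSeries,
    ← cauchy2_eq_stirlingTransform, mul_comm] at h

end StirlingTransform

section CauchyNumbers

lemma eulerOp_evenEGF_cauchy2 :
    eulerOp (evenEGF cauchy2) =
      evenEGF cauchy2 - evenEGF cauchy2 ^ 2 * oneAddSqPow (-1 / 2) := by
  have h := congrArg eulerOp evenEGF_cauchy2_mul_arcsinhSeries
  rw [Derivation.leibniz, eulerOp_apply arcsinhSeries, derivative_arcsinhSeries,
    eulerOp_apply X, derivative_X, smul_eq_mul, smul_eq_mul] at h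
  refine mul_left_cancel₀ X_ne_zero ?_
  linear_combination evenEGF cauchy2 * h
    - eulerOp (evenEGF cauchy2) * evenEGF_cauchy2_mul_arcsinhSeries

theorem derivative_evenEGF_cauchy2_quadratic {g g₂ g₄ : ℚ⟦X⟧} (hg : g = evenEGF cauchy2)
    (hg₂ : g₂ = d⁄dX ℚ (d⁄dX ℚ g)) (hg₄ : g₄ = d⁄dX ℚ (d⁄dX ℚ g₂)) :
    30 * g₂ ^ 2 =
      -(5 * eulerOp (g₄ * oneAddSqPow (1 / 2)) + (5 * g₄ - 4 * eulerOp g₄) * oneAddSqPow (1 / 2))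
        - 10 * (3 * eulerOp g₂ + g₂) * oneAddSqPow (-3 / 2)
        - (20 * eulerOp (eulerOp (eulerOp g)) - 55 * eulerOp (eulerOp g) + 36 * eulerOp g - g) *
          oneAddSqPow (-3 / 2) := by
  have h := fallingDerivation_quadratic_relation eulerOp (hg ▸ eulerOp_evenEGF_cauchy2)
    eulerOp_oneAddSqPow_neg_half oneAddSqPow_half_mul_neg_half
  have h₂ : fallingDerivation eulerOp 2 g = X ^ 2 * g₂ := by
    rw [fallingDerivation_eulerOp, hg₂]; rfl
  have h₃ : fallingDerivation eulerOp 3 g = X ^ 2 * eulerOp g₂ := by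
    rw [fallingDerivation_eulerOp, hg₂, eulerOp_apply, ← mul_assoc, ← pow_succ]; rfl
  have h₄ : fallingDerivation eulerOp 4 g = X ^ 4 * g₄ := by
    rw [fallingDerivation_eulerOp, hg₄, hg₂]; rfl
  have h₅ : fallingDerivation eulerOp 5 g = X ^ 4 * eulerOp g₄ := by
    rw [fallingDerivation_eulerOp, hg₄, hg₂, eulerOp_apply, ← mul_assoc, ← pow_succ]; rfl
  have hX : oneAddSqPow (1 / 2) ^ 2 - 1 = X ^ 2 := by
    rw [oneAddSqPow_half_sq, add_sub_cancel_left]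
  rw [h₂, h₃, h₄, h₅, hX, oneAddSqPow_neg_half_cube] at h
  rw [Derivation.leibniz, eulerOp_oneAddSqPow_half, smul_eq_mul, smul_eq_mul]
  refine mul_left_cancel₀ (pow_ne_zero 4 X_ne_zero) ?_
  linear_combination h

theorem evenEGF_cauchy2_quadratic :
    30 * evenEGF (fun l ↦ cauchy2 (l + 1)) ^ 2 =
      -(5 * eulerOp (evenEGF (fun l ↦ cauchy2 (l + 2)) * oneAddSqPow (1 / 2))
          + evenEGF (fun l ↦ (5 - 8 * l) * cauchy2 (l + 2)) * oneAddSqPow (1 / 2))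
        - 10 * evenEGF (fun l ↦ (6 * l + 1) * cauchy2 (l + 1)) * oneAddSqPow (-3 / 2)
        - evenEGF (fun l ↦ (160 * l ^ 3 - 220 * l ^ 2 + 72 * l - 1) * cauchy2 l) *
          oneAddSqPow (-3 / 2) := by
  have h₄ : 5 * evenEGF (fun l ↦ cauchy2 (l + 2)) - 4 * eulerOp (evenEGF fun l ↦ cauchy2 (l + 2)) =
      evenEGF fun l ↦ (5 - 8 * l) * cauchy2 (l + 2) := by
    simp only [eulerOp_evenEGF, ← Nat.ofNat_nsmul_eq_mul, ← map_nsmul, ← map_sub]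
    congr 1
    ext l
    simp only [Pi.sub_apply, Pi.smul_apply]
    simp only [nsmul_eq_mul, Nat.cast_ofNat]
    ring
  have h₂ : 3 * eulerOp (evenEGF fun l ↦ cauchy2 (l + 1)) + evenEGF (fun l ↦ cauchy2 (l + 1)) =
      evenEGF fun l ↦ (6 * l + 1) * cauchy2 (l + 1) := by
    simp only [eulerOp_evenEGF, ← Nat.ofNat_nsmul_eq_mul, ← map_nsmul, ← map_add]
    congr 1
    ext l
    simp only [Pi.add_apply, Pi.smul_apply]
    simp only [nsmul_eq_mul, Nat.cast_ofNat]
    ring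
  have h₀ : 20 * eulerOp (eulerOp (eulerOp (evenEGF cauchy2)))
      - 55 * eulerOp (eulerOp (evenEGF cauchy2)) + 36 * eulerOp (evenEGF cauchy2)
      - evenEGF cauchy2 =
      evenEGF fun l ↦ (160 * l ^ 3 - 220 * l ^ 2 + 72 * l - 1) * cauchy2 l := by
    simp only [eulerOp_evenEGF, ← Nat.ofNat_nsmul_eq_mul, ← map_nsmul, ← map_add, ← map_sub]
    congr 1
    ext l
    simp only [Pi.add_apply, Pi.sub_apply, Pi.smul_apply]
    simp only [nsmul_eq_mul, Nat.cast_ofNat]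
    ring
  rw [← h₄, ← h₂, ← h₀]
  exact derivative_evenEGF_cauchy2_quadratic rfl
    (by rw [derivative_derivative_evenEGF]) (by rw [derivative_derivative_evenEGF])

lemma coeff_evenEGF_mul_oneAddSqPow_half (w u : ℕ → ℚ) (n : ℕ) :
    coeff (2 * n) (evenEGF (fun l ↦ w l * u l) * oneAddSqPow (1 / 2)) =
      -∑ l ∈ Finset.range (n + 1), (-1) ^ (n - l) * w l * ddf (n - l - 1) /
        (2 ^ (n - l) * (n - l).factorial * (2 * l).factorial) * u l := by
  have h := coeff_evenEGF_mul_oneAddSqPow (fun l ↦ w l * u l) (-1) n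
  have hddf : ddf (-1) = -1 := by rw [ddf]; norm_num [odFact]
  have hexp : (-(2 * ((-1 : ℤ) : ℚ) + 1) / 2) = 1 / 2 := by norm_num
  rw [hddf, hexp, div_neg, div_one] at h
  rw [h]
  congr 1
  refine Finset.sum_congr rfl fun l _ ↦ ?_
  rw [sub_eq_add_neg _ (1 : ℤ)]
  ring

lemma coeff_evenEGF_mul_oneAddSqPow_neg_three_half (w u : ℕ → ℚ) (n : ℕ) :
    coeff (2 * n) (evenEGF (fun l ↦ w l * u l) * oneAddSqPow (-3 / 2)) =
      ∑ l ∈ Finset.range (n + 1), (-1) ^ (n - l) * w l * ddf (n - l + 1) /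
        (2 ^ (n - l) * (n - l).factorial * (2 * l).factorial) * u l := by
  have h := coeff_evenEGF_mul_oneAddSqPow (fun l ↦ w l * u l) 1 n
  have hddf : ddf 1 = 1 := by rw [ddf]; norm_num [odFact]
  have hexp : (-(2 * ((1 : ℤ) : ℚ) + 1) / 2) = -3 / 2 := by norm_num
  rw [hddf, hexp, div_one] at h
  rw [h]
  refine Finset.sum_congr rfl fun l _ ↦ ?_
  ring

lemma coeff_five_mul_eulerOp_add (u : ℕ → ℚ) (f : ℚ⟦X⟧) (n : ℕ) :
    coeff (2 * n) (5 * eulerOp (evenEGF u * f) + evenEGF (fun l ↦ (5 - 8 * l) * u l) * f) =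
      coeff (2 * n) (evenEGF (fun l ↦ (10 * n - 8 * l + 5) * u l) * f) := by
  have h : evenEGF (fun l ↦ (10 * n - 8 * l + 5) * u l) =
      (10 * n : ℚ) • evenEGF u + evenEGF fun l ↦ (5 - 8 * l) * u l := by
    rw [← map_smul, ← map_add]
    congr 1
    ext l
    simp only [Pi.add_apply, Pi.smul_apply, smul_eq_mul]
    ring
  rw [h, add_mul, smul_mul_assoc, map_add, map_add, coeff_smul,
    coeff_ofNat_mul, coeff_eulerOp]
  push_cast
  ring

end CauchyNumbers

theorem statement4 (n : ℕ) :
    ∑ i ∈ Finset.range (n + 1),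
        (Nat.choose (2 * n) (2 * i) : ℚ) * cauchy2 (i + 1) * cauchy2 (n - i + 1) =
    (Nat.factorial (2 * n) : ℚ) / 30 * ∑ l ∈ Finset.range (n + 1),
        (-1 : ℚ) ^ (n - l) * (10 * (n : ℚ) - 8 * (l : ℚ) + 5) * ddf ((n : ℤ) - l - 1) /
          ((2 : ℚ) ^ (n - l) * (Nat.factorial (n - l) : ℚ) * (Nat.factorial (2 * l) : ℚ)) *
          cauchy2 (l + 2)
    - (Nat.factorial (2 * n) : ℚ) / 3 * ∑ l ∈ Finset.range (n + 1),
        (-1 : ℚ) ^ (n - l) * (6 * (l : ℚ) + 1) * ddf ((n : ℤ) - l + 1) /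
          ((2 : ℚ) ^ (n - l) * (Nat.factorial (n - l) : ℚ) * (Nat.factorial (2 * l) : ℚ)) *
          cauchy2 (l + 1)
    - (Nat.factorial (2 * n) : ℚ) / 30 * ∑ l ∈ Finset.range (n + 1),
        (-1 : ℚ) ^ (n - l) *
          (160 * (l : ℚ) ^ 3 - 220 * (l : ℚ) ^ 2 + 72 * (l : ℚ) - 1) * ddf ((n : ℤ) - l + 1) /
          ((2 : ℚ) ^ (n - l) * (Nat.factorial (n - l) : ℚ) * (Nat.factorial (2 * l) : ℚ)) *
          cauchy2 l := by
  have h := congrArg (coeff (2 * n)) evenEGF_cauchy2_quadratic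
  rw [map_sub, map_sub, map_neg, coeff_five_mul_eulerOp_add, coeff_evenEGF_mul_oneAddSqPow_half,
    neg_neg, mul_assoc 10, coeff_ofNat_mul, coeff_ofNat_mul,
    coeff_evenEGF_mul_oneAddSqPow_neg_three_half, coeff_evenEGF_mul_oneAddSqPow_neg_three_half,
    sq, coeff_evenEGF_mul_evenEGF, ← mul_div_assoc,
    div_eq_iff (Nat.cast_ne_zero.mpr (2 * n).factorial_ne_zero)] at h
  linear_combination h / 30
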